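/- arXiv:1907.09102 — 9 statements merged into one kernel-verified Lean document; each statement's English description precedes it below -/
import Mathlib

section
/- Let ≿ be the Choquet expected utility preference on simple acts determined by a capacity ν on (Ω, Σ) and a utility function u that attains at least two distinct values. Then an event E ∈ Σ is ≿-believed if and only if ν((Ω ∖ E) ∪ F) = ν(F) for every F ∈ Σ with F ⊆ E. -/
/-!
The Choquet integral of a finite-range function depends only on the capacities of its upper level
sets (`choquetInt_congr`), because values outside the range contribute nothing to the defining sum.

If `ν (Eᶜ ∪ F) = ν F` for all measurable `F ⊆ E`, then changing an act off `E` does not change the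
capacity of any level set `A`: by monotonicity `ν A` lies between `ν (E ∩ A)` and `ν (Eᶜ ∪ (E ∩ A))`,
and `E ∩ A` is unaffected (`eq_inter_of_capacity_condition`). Conversely, for outcomes with
`u y < u x`, an act paying `x` on `A` and `y` elsewhere has utility `u y + (u x - u y) * ν A`
(`ceu_bet`); comparing the bets on `F` and on `Eᶜ ∪ F`, which differ only off `E`, gives
`ν (Eᶜ ∪ F) ≤ ν F`.
-/

open Classical

noncomputable section

/-- A capacity on a measurable space `Ω`: normalized and monotone on measurable sets. -/
structure MCapacity (Ω : Type*) [MeasurableSpace Ω] where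
  toFun : Set Ω → ℝ
  empty' : toFun ∅ = 0
  univ' : toFun Set.univ = 1
  mono' : ∀ ⦃E F : Set Ω⦄, MeasurableSet E → MeasurableSet F → E ⊆ F → toFun E ≤ toFun F

/-- The Choquet integral of a finite-range function `g` with respect to the set
function `ν`:  `∑ x ∈ range g, x * (ν {g ≥ x} - ν {g > x})`, which for the distinct
values `x₁ > x₂ > … > xₙ` of `g` equals `∑ᵢ xᵢ (ν(E₁ ∪ ⋯ ∪ Eᵢ) - ν(E₁ ∪ ⋯ ∪ Eᵢ₋₁))`
where `Eᵢ = {ω | g ω = xᵢ}`. (Defined as `0` in the degenerate infinite-range case.) -/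
def choquetInt {σ : Type*} (ν : Set σ → ℝ) (g : σ → ℝ) : ℝ :=
  if hf : (Set.range g).Finite then
    ∑ x ∈ hf.toFinset, x * (ν {s | x ≤ g s} - ν {s | x < g s})
  else 0

variable {Ω : Type*} [MeasurableSpace Ω]

/-- A simple act: a measurable map `Ω → X ⊆ ℝ` with finite range. -/
structure SimpleAct (Ω : Type*) [MeasurableSpace Ω] (X : Set ℝ) where
  toFun : Ω → ℝ
  mem_X : ∀ ω, toFun ω ∈ X
  meas : ∀ x : ℝ, MeasurableSet (toFun ⁻¹' {x})
  finRange : (Set.range toFun).Finite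

/-- The Choquet expected utility of a simple act. -/
def ceu {X : Set ℝ} (ν : Set Ω → ℝ) (u : ℝ → ℝ) (f : SimpleAct Ω X) : ℝ :=
  choquetInt ν (fun ω => u (f.toFun ω))

/-- The Choquet expected utility preference: `Pref ν u f g` means `f ≿ g`. -/
def Pref {X : Set ℝ} (ν : Set Ω → ℝ) (u : ℝ → ℝ) (f g : SimpleAct Ω X) : Prop :=
  ceu ν u g ≤ ceu ν u f

/-- The composite act `f_E h`, equal to `f` on `E` and to `h` off `E`. -/
def compAct {X : Set ℝ} (E : Set Ω) (hE : MeasurableSet E) (f h : SimpleAct Ω X) :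
    SimpleAct Ω X where
  toFun := fun ω => if ω ∈ E then f.toFun ω else h.toFun ω
  mem_X := by
    intro ω
    by_cases hω : ω ∈ E <;> simp only [hω, if_true, if_false]
    · exact f.mem_X ω
    · exact h.mem_X ω
  meas := by
    intro x
    have heq : (fun ω => if ω ∈ E then f.toFun ω else h.toFun ω) ⁻¹' {x}
        = (E ∩ f.toFun ⁻¹' {x}) ∪ (Eᶜ ∩ h.toFun ⁻¹' {x}) := by
      ext ω
      by_cases hω : ω ∈ E <;> simp [hω]
    rw [heq]
    exact (hE.inter (f.meas x)).union (hE.compl.inter (h.meas x))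
  finRange := by
    apply (f.finRange.union h.finRange).subset
    rintro y ⟨ω, rfl⟩
    by_cases hω : ω ∈ E
    · exact Or.inl ⟨ω, by simp [hω]⟩
    · exact Or.inr ⟨ω, by simp [hω]⟩

/-- An event `E` is `≿`-null: `f_E h ≿ g_E h` for all simple acts `f, g, h`. -/
def NullEvt {X : Set ℝ} (ν : Set Ω → ℝ) (u : ℝ → ℝ) (E : Set Ω) (hE : MeasurableSet E) :
    Prop :=
  ∀ f g h : SimpleAct Ω X, Pref ν u (compAct E hE f h) (compAct E hE g h)

/-- An event `E` is `≿`-believed: its complement is `≿`-null. -/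
def BelievedEvt {X : Set ℝ} (ν : Set Ω → ℝ) (u : ℝ → ℝ) (E : Set Ω)
    (hE : MeasurableSet E) : Prop :=
  NullEvt (X := X) ν u Eᶜ hE.compl

/-- The defining sum may run over any finite set containing the range: for `x` outside the range,
`{x ≤ g}` and `{x < g}` coincide. -/
lemma choquetInt_eq_sum {σ : Type*} (ν : Set σ → ℝ) (g : σ → ℝ) (S : Finset ℝ)
    (hS : Set.range g ⊆ S) :
    choquetInt ν g = ∑ x ∈ S, x * (ν {s | x ≤ g s} - ν {s | x < g s}) := by
  have hf : (Set.range g).Finite := S.finite_toSet.subset hS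
  rw [choquetInt, dif_pos hf]
  apply Finset.sum_subset
  · intro x hx
    exact hS (hf.mem_toFinset.1 hx)
  · intro x _ hx
    have hne : ∀ s, x ≠ g s := fun s h => hx (hf.mem_toFinset.2 ⟨s, h.symm⟩)
    have : {s | x ≤ g s} = {s | x < g s} := by
      ext s
      exact (hne s).le_iff_lt
    rw [this, sub_self, mul_zero]

lemma choquetInt_congr {σ : Type*} (ν : Set σ → ℝ) (g₁ g₂ : σ → ℝ)
    (h₁ : (Set.range g₁).Finite) (h₂ : (Set.range g₂).Finite)
    (hle : ∀ x, ν {s | x ≤ g₁ s} = ν {s | x ≤ g₂ s})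
    (hlt : ∀ x, ν {s | x < g₁ s} = ν {s | x < g₂ s}) :
    choquetInt ν g₁ = choquetInt ν g₂ := by
  rw [choquetInt_eq_sum ν g₁ (h₁.toFinset ∪ h₂.toFinset) (by simp),
    choquetInt_eq_sum ν g₂ (h₁.toFinset ∪ h₂.toFinset) (by simp)]
  simp only [hle, hlt]

lemma SimpleAct.measurableSet_preimage {X : Set ℝ} (f : SimpleAct Ω X) (S : Set ℝ) :
    MeasurableSet (f.toFun ⁻¹' S) := by
  have : f.toFun ⁻¹' S = ⋃ x ∈ Set.range f.toFun ∩ S, f.toFun ⁻¹' {x} := by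
    ext ω
    simp
  rw [this]
  exact MeasurableSet.biUnion (f.finRange.inter_of_left S).countable fun x _ => f.meas x

lemma SimpleAct.finite_range_comp {X : Set ℝ} (f : SimpleAct Ω X) (u : ℝ → ℝ) :
    (Set.range fun ω => u (f.toFun ω)).Finite := by
  rw [show (fun ω => u (f.toFun ω)) = u ∘ f.toFun from rfl, Set.range_comp]
  exact f.finRange.image u

lemma eq_inter_of_capacity_condition (ν : MCapacity Ω) {E : Set Ω} (hE : MeasurableSet E)
    (hν : ∀ F : Set Ω, MeasurableSet F → F ⊆ E → ν.toFun (Eᶜ ∪ F) = ν.toFun F)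
    {A : Set Ω} (hA : MeasurableSet A) : ν.toFun A = ν.toFun (E ∩ A) := by
  apply le_antisymm
  · rw [← hν (E ∩ A) (hE.inter hA) Set.inter_subset_left]
    refine ν.mono' hA (hE.compl.union (hE.inter hA)) fun ω hω => ?_
    by_cases h : ω ∈ E
    · exact Or.inr ⟨h, hω⟩
    · exact Or.inl h
  · exact ν.mono' (hE.inter hA) hA Set.inter_subset_right

lemma level_eq_of_capacity_condition {X : Set ℝ} (ν : MCapacity Ω) {E : Set Ω}
    (hE : MeasurableSet E)
    (hν : ∀ F : Set Ω, MeasurableSet F → F ⊆ E → ν.toFun (Eᶜ ∪ F) = ν.toFun F)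
    (f g h : SimpleAct Ω X) (S : Set ℝ) :
    ν.toFun ((compAct Eᶜ hE.compl f h).toFun ⁻¹' S) =
      ν.toFun ((compAct Eᶜ hE.compl g h).toFun ⁻¹' S) := by
  rw [eq_inter_of_capacity_condition ν hE hν (SimpleAct.measurableSet_preimage _ S),
    eq_inter_of_capacity_condition ν hE hν
      ((compAct Eᶜ hE.compl g h).measurableSet_preimage S)]
  congr 1
  ext ω
  by_cases hω : ω ∈ E <;> simp [compAct, hω]

/-- The constant act with value `x`. -/
def SimpleAct.const {X : Set ℝ} (x : ℝ) (hx : x ∈ X) : SimpleAct Ω X where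
  toFun := fun _ => x
  mem_X := fun _ => hx
  meas := fun y => by
    by_cases h : x = y <;> simp [h]
  finRange := (Set.finite_singleton x).subset (by rintro _ ⟨_, rfl⟩; rfl)

lemma ceu_bet {X : Set ℝ} (ν : MCapacity Ω) (u : ℝ → ℝ) {x y : ℝ} (hxy : u y < u x)
    (f : SimpleAct Ω X) (A : Set Ω) (hfA : ∀ ω ∈ A, f.toFun ω = x)
    (hfA' : ∀ ω ∉ A, f.toFun ω = y) :
    ceu ν.toFun u f = u y + (u x - u y) * ν.toFun A := by
  have hval : ∀ ω, u (f.toFun ω) = if ω ∈ A then u x else u y := by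
    intro ω
    by_cases h : ω ∈ A
    · simp [h, hfA ω h]
    · simp [h, hfA' ω h]
  have h1 : {ω | u x ≤ u (f.toFun ω)} = A := by
    ext ω
    by_cases h : ω ∈ A <;> simp [hval, h, hxy]
  have h2 : {ω | u x < u (f.toFun ω)} = ∅ := by
    ext ω
    by_cases h : ω ∈ A <;> simp [hval, h, hxy.le]
  have h3 : {ω | u y ≤ u (f.toFun ω)} = Set.univ := by
    ext ω
    by_cases h : ω ∈ A <;> simp [hval, h, hxy.le]
  have h4 : {ω | u y < u (f.toFun ω)} = A := by
    ext ω
    by_cases h : ω ∈ A <;> simp [hval, h, hxy]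
  rw [ceu, choquetInt_eq_sum ν.toFun _ {u x, u y}, Finset.sum_pair hxy.ne', h1, h2, h3, h4,
    ν.empty', ν.univ']
  · ring
  · rintro _ ⟨ω, rfl⟩
    by_cases h : ω ∈ A <;> simp [hval, h]

/-- Let `≿` be the Choquet expected utility preference on simple acts
determined by a capacity `ν` and a utility `u` attaining at least two distinct values on
the compact outcome set `X`. A measurable event `E` is `≿`-believed iff
`ν(Eᶜ ∪ F) = ν(F)` for every measurable `F ⊆ E`. -/
theorem believed_iff_capacity_condition (X : Set ℝ) (hX : IsCompact X) (u : ℝ → ℝ)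
    (hu : ∃ x ∈ X, ∃ y ∈ X, u x ≠ u y) (ν : MCapacity Ω) (E : Set Ω)
    (hE : MeasurableSet E) :
    BelievedEvt (X := X) ν.toFun u E hE ↔
      (∀ F : Set Ω, MeasurableSet F → F ⊆ E → ν.toFun (Eᶜ ∪ F) = ν.toFun F) := by
  constructor
  · intro hB F hF hFE
    obtain ⟨x, hx, y, hy, hxy⟩ : ∃ x ∈ X, ∃ y ∈ X, u y < u x := by
      obtain ⟨x, hx, y, hy, hne⟩ := hu
      rcases lt_or_gt_of_ne hne with h | h
      · exact ⟨y, hy, x, hx, h⟩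
      · exact ⟨x, hx, y, hy, h⟩
    apply le_antisymm _ (ν.mono' hF (hE.compl.union hF) Set.subset_union_right)
    let cx : SimpleAct Ω X := SimpleAct.const x hx
    let cy : SimpleAct Ω X := SimpleAct.const y hy
    have key := hB cy cx (compAct F hF cx cy)
    rw [Pref, ceu_bet ν u hxy _ (Eᶜ ∪ F), ceu_bet ν u hxy _ F] at key
    · exact le_of_mul_le_mul_left (by linarith) (sub_pos.2 hxy)
    · intro ω hω
      simp [compAct, cx, cy, SimpleAct.const, hω, hFE hω]
    · intro ω hω
      simp [compAct, cx, cy, SimpleAct.const, hω]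
    · rintro ω (hω | hω)
      · have hω' : ω ∉ E := hω
        simp [compAct, cx, cy, SimpleAct.const, hω']
      · simp [compAct, cx, cy, SimpleAct.const, hω]
    · intro ω hω
      have hω' : ω ∈ E ∧ ω ∉ F := by simpa using hω
      simp [compAct, cx, cy, SimpleAct.const, hω']
  · intro hν f g h
    refine le_of_eq (choquetInt_congr _ _ _ (SimpleAct.finite_range_comp _ u)
      (SimpleAct.finite_range_comp _ u) (fun t => ?_) fun t => ?_)
    · exact level_eq_of_capacity_condition ν hE hν g f h {z | t ≤ u z}
    · exact level_eq_of_capacity_condition ν hE hν g f h {z | t < u z}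

end
end

section
/- Let ν be a capacity on a measurable space (Ω, Σ) and let E ∈ Σ. The following are equivalent: (i) ν believes E; (ii) E is additively-separable for ν and ν(E) = 1; (iii) E is additively-separable for ν and ν(Ω ∖ E) = 0. -/
/-- A capacity `ν` believes the event `E`: `ν(Eᶜ ∪ F) = ν(F)` for every measurable
`F ⊆ E`. -/
def MBelieves {Ω : Type*} [MeasurableSpace Ω] (ν : MCapacity Ω) (E : Set Ω) : Prop :=
  ∀ F : Set Ω, MeasurableSet F → F ⊆ E → ν.toFun (Eᶜ ∪ F) = ν.toFun F

/-- An event `E` is additively-separable for `ν`: `ν(F) = ν(F ∩ E) + ν(F ∩ Eᶜ)` for every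
measurable `F`. -/
def AddSep {Ω : Type*} [MeasurableSpace Ω] (ν : MCapacity Ω) (E : Set Ω) : Prop :=
  ∀ F : Set Ω, MeasurableSet F → ν.toFun F = ν.toFun (F ∩ E) + ν.toFun (F ∩ Eᶜ)

/-- For a capacity `ν` and a measurable event `E`, the following are
equivalent: (i) `ν` believes `E`; (ii) `E` is additively-separable for `ν` and
`ν(E) = 1`; (iii) `E` is additively-separable for `ν` and `ν(Ω ∖ E) = 0`. -/
theorem believes_iff_unambiguous_with_value_one {Ω : Type*} [MeasurableSpace Ω]
    (ν : MCapacity Ω) (E : Set Ω) (hE : MeasurableSet E) :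
    (MBelieves ν E ↔ (AddSep ν E ∧ ν.toFun E = 1)) ∧
    (MBelieves ν E ↔ (AddSep ν E ∧ ν.toFun Eᶜ = 0)) := by
  have sep_compl : AddSep ν E → ν.toFun E + ν.toFun Eᶜ = 1 := fun h => by
    have := h Set.univ MeasurableSet.univ
    rw [Set.univ_inter, Set.univ_inter, ν.univ'] at this
    exact this.symm
  have compl_zero : MBelieves ν E → ν.toFun Eᶜ = 0 := fun h => by
    simpa [ν.empty'] using h ∅ MeasurableSet.empty (Set.empty_subset E)
  have sep : MBelieves ν E → AddSep ν E := fun h F hF => by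
    have hFE := hF.inter hE
    have hFc := hF.inter hE.compl
    have nonneg := ν.mono' MeasurableSet.empty hFc (Set.empty_subset _)
    have le_zero := ν.mono' hFc hE.compl Set.inter_subset_right
    have lower := ν.mono' hFE hF Set.inter_subset_left
    have upper : ν.toFun F ≤ ν.toFun (Eᶜ ∪ F ∩ E) :=
      ν.mono' hF (hE.compl.union hFE) fun x hx => by
        by_cases hxE : x ∈ E
        · exact Or.inr ⟨hx, hxE⟩
        · exact Or.inl hxE
    rw [h _ hFE Set.inter_subset_right] at upper
    rw [ν.empty'] at nonneg
    rw [compl_zero h] at le_zero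
    linarith
  have believes : AddSep ν E → ν.toFun Eᶜ = 0 → MBelieves ν E := fun h h0 F hF hFE => by
    have key := h (Eᶜ ∪ F) (hE.compl.union hF)
    have inter_E : (Eᶜ ∪ F) ∩ E = F := by
      rw [Set.union_inter_distrib_right, Set.compl_inter_self, Set.empty_union,
        Set.inter_eq_left.mpr hFE]
    rw [inter_E, Set.union_inter_cancel_left, h0, add_zero] at key
    exact key
  refine ⟨⟨fun h => ⟨sep h, ?_⟩, fun h => believes h.1 ?_⟩,
    ⟨fun h => ⟨sep h, compl_zero h⟩, fun h => believes h.1 h.2⟩⟩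
  · linarith [sep_compl (sep h), compl_zero h]
  · linarith [sep_compl h.1, h.2]
end

section
/- For any finite strategic game and any player i ∈ I, the set of level-k Choquet rationalizable actions R_i^k is nonempty for every k ≥ 1, and the set of Choquet rationalizable actions R_i^∞ is nonempty. -/
/-! Point masses suffice as beliefs.  The Dirac capacity at an opponents' profile `b` believes every
event containing `b`, so if `b` consists of level-`k` rationalizable actions, which are then also
rationalizable at all lower levels (`Rk_antitone`), the point mass at `b` survives every belief
restriction up to level `k + 1` (`dirac_mem_CR`).  Since action sets are finite, a best response to
this point mass exists, so nonemptiness propagates through the levels for all players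
simultaneously.  The limit set is nonempty because a decreasing sequence of nonempty subsets of a
finite set has nonempty intersection. -/

open Classical

noncomputable section

/-- A capacity on a set of states `σ` (all subsets measurable): normalized and monotone. -/
structure Capacity (σ : Type*) where
  toFun : Set σ → ℝ
  empty' : toFun ∅ = 0
  univ' : toFun Set.univ = 1
  mono' : ∀ ⦃E F : Set σ⦄, E ⊆ F → toFun E ≤ toFun F

/-- A set function `ν` believes an event `E` if `ν(Eᶜ ∪ F) = ν F` for every `F ⊆ E`. -/
def Believes {σ : Type*} (ν : Set σ → ℝ) (E : Set σ) : Prop :=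
  ∀ F : Set σ, F ⊆ E → ν (Eᶜ ∪ F) = ν F

variable {I : Type} [Fintype I] [DecidableEq I]

/-- Profiles of the opponents of player `i`. -/
abbrev Opp (A : I → Type) (i : I) : Type := ∀ j : {j : I // j ≠ i}, A j.val

variable (A : I → Type) [∀ i, Fintype (A i)] [∀ i, Nonempty (A i)]
  (U : ∀ i, (∀ j, A j) → ℝ)

/-- Combine an action of player `i` with a profile of opponents' actions. -/
def extendProf (i : I) (a : A i) (b : Opp A i) : ∀ j, A j :=
  fun j => if h : j = i then cast (congrArg A h.symm) a else b ⟨j, h⟩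

/-- The payoff to `i` from action `a`, as a function of opponents' profiles. -/
def payoff (i : I) (a : A i) : Opp A i → ℝ :=
  fun b => U i (extendProf A i a b)

/-- `a` is a Choquet best response to the capacity (set function) `ν` on `A₋ᵢ`. -/
def IsCBR (i : I) (ν : Set (Opp A i) → ℝ) (a : A i) : Prop :=
  ∀ a' : A i, choquetInt ν (payoff A U i a') ≤ choquetInt ν (payoff A U i a)

/-- The product `∏_{j ≠ i} Q j` viewed as a set of opponents' profiles. -/
def prodSet {τ : I → Type} (i : I) (Q : ∀ j, Set (τ j)) :
    Set (∀ j : {j : I // j ≠ i}, τ j.val) :=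
  {b | ∀ j, b j ∈ Q j.val}

/-- The inductive definition of Choquet rationalizability: `(CR k).1 i` is the
set `C_i^{k+1}` of capacities and `(CR k).2 i` is the set `R_i^{k+1}` of actions
(indices shifted by one: Lean level `k` is paper level `k+1`). -/
def CR : ℕ → (∀ i, Set (Capacity (Opp A i))) × (∀ i, Set (A i))
  | 0 =>
      ⟨fun _ => Set.univ,
       fun i => {a | ∃ ν ∈ (Set.univ : Set (Capacity (Opp A i))), IsCBR A U i ν.toFun a}⟩
  | k + 1 =>
      let p := CR k
      let C : ∀ i, Set (Capacity (Opp A i)) :=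
        fun i => {ν ∈ p.1 i | Believes ν.toFun (prodSet i p.2)}
      ⟨C, fun i => {a | ∃ ν ∈ C i, IsCBR A U i ν.toFun a}⟩

/-- `Rk k i` is the set `R_i^{k+1}` of level-`(k+1)` Choquet rationalizable actions. -/
def Rk (k : ℕ) (i : I) : Set (A i) := (CR A U k).2 i

/-- `Rinf i = R_i^∞`, the Choquet rationalizable actions of player `i`. -/
def Rinf (i : I) : Set (A i) := ⋂ k, Rk A U k i

/-- The point mass at `b`, as a capacity. -/
def diracCapacity {σ : Type*} (b : σ) : Capacity σ where
  toFun E := if b ∈ E then 1 else 0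
  empty' := by simp
  univ' := by simp
  mono' := by
    intro E F h
    by_cases hE : b ∈ E
    · simp [hE, h hE]
    · simp only [hE, if_false]
      split_ifs <;> norm_num

lemma diracCapacity_believes {σ : Type*} {b : σ} {E : Set σ} (hb : b ∈ E) :
    Believes (diracCapacity b).toFun E := by
  intro F _
  simp [diracCapacity, hb]

lemma Rk_antitone (i : I) : Antitone (fun k => Rk A U k i) := by
  refine antitone_nat_of_succ_le fun k => ?_
  rintro a ⟨ν, hν, ha⟩
  cases k with
  | zero => exact ⟨ν, Set.mem_univ _, ha⟩
  | succ k => exact ⟨ν, hν.1, ha⟩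

/-- A point mass on a profile of actions surviving all levels below `k` is an admissible belief at
level `k`. -/
lemma dirac_mem_CR (i : I) (b : Opp A i) (k : ℕ)
    (hb : ∀ l < k, ∀ j, b j ∈ Rk A U l j.val) : diracCapacity b ∈ (CR A U k).1 i := by
  induction k with
  | zero => exact Set.mem_univ _
  | succ k ih =>
    exact ⟨ih fun l hl => hb l (by omega), diracCapacity_believes (hb k (by omega))⟩

lemma exists_isCBR (i : I) (ν : Set (Opp A i) → ℝ) : ∃ a, IsCBR A U i ν a :=
  Finite.exists_max fun a => choquetInt ν (payoff A U i a)

lemma Rk_nonempty (k : ℕ) : ∀ i, (Rk A U k i).Nonempty := by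
  induction k with
  | zero =>
    intro i
    obtain ⟨a, ha⟩ := exists_isCBR A U i
      (diracCapacity (Classical.arbitrary (Opp A i))).toFun
    exact ⟨a, _, Set.mem_univ _, ha⟩
  | succ k ih =>
    intro i
    choose s hs using ih
    have hν := dirac_mem_CR A U i (fun j => s j.val) (k + 1)
      fun l hl j => Rk_antitone A U j.val (by omega : l ≤ k) (hs j.val)
    obtain ⟨a, ha⟩ := exists_isCBR A U i (diracCapacity (fun j => s j.val : Opp A i)).toFun
    exact ⟨a, _, hν, ha⟩

/-- Existence: For any finite strategic game and player `i`,
the level-`k` Choquet rationalizable set is nonempty for every level, and the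
set of Choquet rationalizable actions `R_i^∞` is nonempty. -/
theorem choquet_rationalizable_nonempty [Nonempty I] (i : I) :
    (∀ k : ℕ, (Rk A U k i).Nonempty) ∧ (Rinf A U i).Nonempty := by
  refine ⟨fun k => Rk_nonempty A U k i, ?_⟩
  by_contra hempty
  have hleave : ∀ a : A i, ∃ k, a ∉ Rk A U k i := by
    intro a
    by_contra! h
    exact hempty ⟨a, Set.mem_iInter.2 h⟩
  choose n hn using hleave
  -- At the largest elimination time, every action has already been eliminated.
  obtain ⟨a, ha⟩ := Rk_nonempty A U (Finset.univ.sup n) i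
  exact hn a (Rk_antitone A U i (Finset.le_sup (Finset.mem_univ a)) ha)

end
end

section
/- For any finite strategic game, among all collections (Q_i)_{i∈I} with Q_i ⊆ A_i satisfying the best-response property there is a unique largest one: there exists a collection (R_i)_{i∈I} satisfying the best-response property such that Q_i ⊆ R_i for all i ∈ I whenever (Q_i)_{i∈I} satisfies the best-response property, and any two such largest collections coincide. (In particular, the componentwise union of all collections satisfying the best-response property itself satisfies the best-response property.) -/
/-!
Belief is monotone in the event: if a capacity `ν` believes `E` and `E ⊆ E'`, then `ν` believes `E'`,
because for `F ⊆ E'` the set `E'ᶜ ∪ F` lies in `Eᶜ ∪ (F ∩ E)`, whose capacity is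
`ν (F ∩ E) ≤ ν F` (`Believes.mono`). Hence every capacity that justifies an action within one
collection `Q` still justifies it within any larger collection, and so the best-response property
passes to arbitrary componentwise unions (`BRProp.union`). The union of all collections with the
property is the largest one, and uniqueness is antisymmetry of inclusion.
-/

open Classical

noncomputable section

variable {I : Type} [Fintype I] [DecidableEq I]

variable (A : I → Type) [∀ i, Fintype (A i)] [∀ i, Nonempty (A i)]
  (U : ∀ i, (∀ j, A j) → ℝ)

/-- A collection `(Q i)_{i ∈ I}` of action sets has the best-response property if every
`a ∈ Q i` is a Choquet best response to some capacity on `A₋ᵢ` that believes `Q₋ᵢ`. -/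
def BRProp (Q : ∀ i, Set (A i)) : Prop :=
  ∀ i, ∀ a ∈ Q i, ∃ ν : Capacity (Opp A i),
    Believes ν.toFun (prodSet i Q) ∧ IsCBR A U i ν.toFun a

theorem Believes.mono {σ : Type*} (ν : Capacity σ) {E E' : Set σ} (hE : E ⊆ E')
    (h : Believes ν.toFun E) : Believes ν.toFun E' := by
  intro F _
  apply le_antisymm
  · calc ν.toFun (E'ᶜ ∪ F) ≤ ν.toFun (Eᶜ ∪ (F ∩ E)) := by
          apply ν.mono'
          rintro x (hx | hx)
          · exact Or.inl fun hxE => hx (hE hxE)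
          · by_cases hxE : x ∈ E
            · exact Or.inr ⟨hx, hxE⟩
            · exact Or.inl hxE
      _ = ν.toFun (F ∩ E) := h _ Set.inter_subset_right
      _ ≤ ν.toFun F := ν.mono' Set.inter_subset_left
  · exact ν.mono' Set.subset_union_right

theorem BRProp.union (S : Set (∀ j, Set (A j))) (hS : ∀ Q ∈ S, BRProp A U Q) :
    BRProp A U (fun i => ⋃ Q ∈ S, Q i) := by
  intro i a ha
  obtain ⟨Q, hQ, haQ⟩ := Set.mem_iUnion₂.1 ha
  obtain ⟨ν, hν, hbr⟩ := hS Q hQ i a haQ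
  refine ⟨ν, hν.mono ν fun b hb j => ?_, hbr⟩
  exact Set.mem_biUnion hQ (hb j)

/-- Among all collections with the best-response property there is a
unique largest one; in particular the componentwise union of all such collections
itself has the best-response property. -/
theorem exists_unique_largest_best_response_collection [Nonempty I] :
    ∃ R : ∀ i, Set (A i), BRProp A U R ∧
      (∀ Q : ∀ i, Set (A i), BRProp A U Q → ∀ i, Q i ⊆ R i) ∧
      (∀ R' : ∀ i, Set (A i), BRProp A U R' →
        (∀ Q : ∀ i, Set (A i), BRProp A U Q → ∀ i, Q i ⊆ R' i) → R' = R) ∧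
      BRProp A U (fun i => ⋃ Q ∈ {Q : ∀ j, Set (A j) | BRProp A U Q}, Q i) := by
  have hR := BRProp.union A U {Q | BRProp A U Q} fun _ hQ => hQ
  have hmax : ∀ Q : ∀ i, Set (A i), BRProp A U Q →
      ∀ i, Q i ⊆ ⋃ Q ∈ {Q : ∀ j, Set (A j) | BRProp A U Q}, Q i :=
    fun Q hQ i _ ha => Set.mem_biUnion (show Q ∈ {Q | BRProp A U Q} from hQ) ha
  refine ⟨_, hR, hmax, fun R' hR' hmax' => ?_, hR⟩
  funext i
  exact Set.Subset.antisymm (hmax R' hR' i) (hmax' _ hR i)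

end
end

section
/- Fix a finite strategic game and a capacity type space for it in which, for every player j and every k ≥ 1, the set B^kCR_j is measurable. Then for every player i and every k ≥ 1, s_i(B^kCR_i) ⊆ R_i^k, and consequently s_i(CBCR_i) ⊆ R_i^∞: every action played by a type satisfying Choquet rationality and (k−1)-fold mutual belief in Choquet rationality is level-k Choquet rationalizable. -/
/-!
Every type's conjecture `conj` is an honest capacity on `A₋ᵢ`: since `A₋ᵢ` is finite and the
strategy maps are measurable, every preimage under `smap` is measurable (`measurableSet_smap`),
so monotonicity passes from the capacity on types to the conjecture.

Belief is upward closed: if `P ⊆ G` and `P` is believed, then for measurable `F ⊆ G` one has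
`Gᶜ ∪ F ⊆ Pᶜ ∪ (F ∩ P)`, hence `ν(Gᶜ ∪ F) ≤ ν(Pᶜ ∪ (F ∩ P)) = ν(F ∩ P) ≤ ν F`
(`TBelieves.mono_event`). By induction on `k`, the conjecture of a type in `BkCR k i` lies in
`(CR k).1 i` (`conjCapacity_mem`): the induction hypothesis gives
`prodSet (BkCR k) ⊆ smap⁻¹ (prodSet (Rk k))`, so belief in the former event yields belief in
the latter, which is exactly what the next level requires of the conjecture. Choquet rationality
of the type then makes its action a best response to that capacity.
-/

open Classical

noncomputable section

variable {I : Type} [Fintype I] [DecidableEq I]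

variable (A : I → Type) [∀ i, Fintype (A i)] [∀ i, Nonempty (A i)]
  (U : ∀ i, (∀ j, A j) → ℝ)

variable (T : I → Type) [∀ i, MeasurableSpace (T i)]

/-- Profiles of opponents' types (with the product σ-algebra). -/
abbrev OppT (i : I) : Type := ∀ j : {j : I // j ≠ i}, T j.val

variable (s : ∀ i, T i → A i) (τ : ∀ i, T i → MCapacity (OppT T i))

/-- The map sending a profile of opponents' types to the profile of their actions. -/
def smap (i : I) : OppT T i → Opp A i := fun t j => s j.val (t j)

/-- Type `t`'s conjecture over `A₋ᵢ`: the set function `E ↦ τᵢ(t)(s₋ᵢ⁻¹(E))`. -/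
def conj (i : I) (t : T i) : Set (Opp A i) → ℝ :=
  fun E => (τ i t).toFun (smap A T s i ⁻¹' E)

/-- Type `t` believes the event `E ⊆ T₋ᵢ`: `τᵢ(t)((T₋ᵢ ∖ E) ∪ F) = τᵢ(t)(F)` for all
measurable `F ⊆ E`. -/
def TBelieves (i : I) (t : T i) (E : Set (OppT T i)) : Prop :=
  ∀ F : Set (OppT T i), MeasurableSet F → F ⊆ E →
    (τ i t).toFun (Eᶜ ∪ F) = (τ i t).toFun F

/-- `BkCR k i` is the paper's `B^{k+1}CR_i`: the types of player `i` that are Choquet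
rational and satisfy `k`-fold mutual belief in Choquet rationality. -/
def BkCR : ℕ → ∀ i, Set (T i)
  | 0 => fun i => {t | IsCBR A U i (conj A T s τ i t) (s i t)}
  | k + 1 => fun i => {t | t ∈ BkCR k i ∧ TBelieves T τ i t (prodSet i (BkCR k))}

/-- `CBCRset i`: types of player `i` satisfying Choquet rationality and common belief in
Choquet rationality. -/
def CBCRset (i : I) : Set (T i) := ⋂ k, BkCR A U T s τ k i

lemma measurableSet_smap (hs : ∀ (j : I) (S : Set (A j)), MeasurableSet (s j ⁻¹' S))
    (i : I) (E : Set (Opp A i)) : MeasurableSet (smap A T s i ⁻¹' E) := by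
  -- A preimage under `smap` is a finite union of fibres, each a finite intersection of cylinders.
  have hE : smap A T s i ⁻¹' E =
      ⋃ b ∈ E, ⋂ j : {j : I // j ≠ i}, (fun t : OppT T i => t j) ⁻¹' (s j.val ⁻¹' {b j}) := by
    ext t
    simp only [Set.mem_preimage, Set.mem_iUnion, Set.mem_iInter, Set.mem_singleton_iff,
      exists_prop]
    constructor
    · intro h
      exact ⟨_, h, fun j => rfl⟩
    · rintro ⟨b, hb, h⟩
      have hbt : smap A T s i t = b := funext h
      rwa [hbt]
  rw [hE]
  exact MeasurableSet.biUnion (Set.toFinite E).countable fun b _ =>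
    MeasurableSet.iInter fun j => measurable_pi_apply j (hs j.val {b j})

lemma measurableSet_prodSet (i : I) (Q : ∀ j, Set (T j)) (hQ : ∀ j, MeasurableSet (Q j)) :
    MeasurableSet (prodSet (τ := T) i Q) := by
  have h : prodSet (τ := T) i Q =
      ⋂ j : {j : I // j ≠ i}, (fun t : OppT T i => t j) ⁻¹' Q j.val := by
    ext t
    simp [prodSet]
  rw [h]
  exact MeasurableSet.iInter fun j => measurable_pi_apply j (hQ j.val)

/-- The conjecture of type `t` over `A₋ᵢ`, bundled as a capacity. -/
def conjCapacity (hs : ∀ (j : I) (S : Set (A j)), MeasurableSet (s j ⁻¹' S))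
    (i : I) (t : T i) : Capacity (Opp A i) where
  toFun := conj A T s τ i t
  empty' := by simpa [conj] using (τ i t).empty'
  univ' := by simpa [conj] using (τ i t).univ'
  mono' := fun E F h => (τ i t).mono' (measurableSet_smap A T s hs i E)
    (measurableSet_smap A T s hs i F) (Set.preimage_mono h)

/-- Belief is inherited by larger measurable events. -/
lemma TBelieves.mono_event {i : I} {t : T i} {P G : Set (OppT T i)}
    (hP : MeasurableSet P) (hG : MeasurableSet G) (hPG : P ⊆ G)
    (h : TBelieves T τ i t P) : TBelieves T τ i t G := by
  intro F hF _
  apply le_antisymm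
  · calc (τ i t).toFun (Gᶜ ∪ F) ≤ (τ i t).toFun (Pᶜ ∪ (F ∩ P)) := by
          refine (τ i t).mono' (hG.compl.union hF) (hP.compl.union (hF.inter hP)) ?_
          rintro x (hx | hx)
          · exact Or.inl fun hxP => hx (hPG hxP)
          · by_cases hxP : x ∈ P
            · exact Or.inr ⟨hx, hxP⟩
            · exact Or.inl hxP
      _ = (τ i t).toFun (F ∩ P) := h _ (hF.inter hP) Set.inter_subset_right
      _ ≤ (τ i t).toFun F := (τ i t).mono' (hF.inter hP) hF Set.inter_subset_left
  · exact (τ i t).mono' hF (hG.compl.union hF) Set.subset_union_right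

lemma isCBR_of_mem_BkCR (k : ℕ) (i : I) (t : T i) (ht : t ∈ BkCR A U T s τ k i) :
    IsCBR A U i (conj A T s τ i t) (s i t) := by
  induction k with
  | zero => exact ht
  | succ k ih => exact ih ht.1

lemma mem_Rk_of_mem {k : ℕ} {i : I} {ν : Capacity (Opp A i)} {a : A i}
    (hν : ν ∈ (CR A U k).1 i) (ha : IsCBR A U i ν.toFun a) : a ∈ Rk A U k i := by
  cases k with
  | zero => exact ⟨ν, hν, ha⟩
  | succ k => exact ⟨ν, hν, ha⟩

/-- The conjecture of a type in the `k`-th belief set belongs to the `k`-th set of capacities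
in the rationalizability procedure. -/
lemma conjCapacity_mem (hs : ∀ (j : I) (S : Set (A j)), MeasurableSet (s j ⁻¹' S))
    (hB : ∀ (j : I) (k : ℕ), MeasurableSet (BkCR A U T s τ k j)) (k : ℕ) :
    ∀ (i : I) (t : T i), t ∈ BkCR A U T s τ k i →
      conjCapacity A T s τ hs i t ∈ (CR A U k).1 i := by
  induction k with
  | zero => exact fun i t _ => Set.mem_univ _
  | succ k ih =>
    intro i t ht
    refine ⟨ih i t ht.1, ?_⟩
    have hsub : prodSet i (BkCR A U T s τ k) ⊆
        smap A T s i ⁻¹' prodSet i (CR A U k).2 := fun b hb j =>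
      mem_Rk_of_mem A U (ih j.val (b j) (hb j)) (isCBR_of_mem_BkCR A U T s τ k j.val (b j) (hb j))
    have hbel := TBelieves.mono_event T τ
      (measurableSet_prodSet T i _ fun j => hB j k) (measurableSet_smap A T s hs i _) hsub ht.2
    exact fun F hF => hbel _ (measurableSet_smap A T s hs i F) (Set.preimage_mono hF)

/-- in any capacity type space (strategy maps measurable, type maps
measurable for the σ-algebra on capacities generated by `{ν : ν(E) ≥ x}`) in which each
`B^kCR_j` is measurable, every action played by a type satisfying Choquet rationality and
`k`-fold mutual belief in Choquet rationality is level-`(k+1)` Choquet rationalizable: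
`sᵢ(B^{k+1}CR_i) ⊆ R_i^{k+1}` (for all paper levels `k ≥ 1`), and hence
`sᵢ(CBCR_i) ⊆ R_i^∞`. -/
theorem CBCR_subset_choquet_rationalizable [Nonempty I]
    (hs : ∀ (j : I) (S : Set (A j)), MeasurableSet (s j ⁻¹' S))
    (hτ : ∀ (i : I) (E : Set (OppT T i)) (x : ℝ), MeasurableSet E → x ∈ Set.Icc (0:ℝ) 1 →
      MeasurableSet {t : T i | x ≤ (τ i t).toFun E})
    (hB : ∀ (j : I) (k : ℕ), MeasurableSet (BkCR A U T s τ k j)) :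
    (∀ (i : I) (k : ℕ), s i '' BkCR A U T s τ k i ⊆ Rk A U k i) ∧
    (∀ i : I, s i '' CBCRset A U T s τ i ⊆ Rinf A U i) := by
  have main : ∀ (i : I) (k : ℕ), s i '' BkCR A U T s τ k i ⊆ Rk A U k i := by
    rintro i k _ ⟨t, ht, rfl⟩
    exact mem_Rk_of_mem A U (conjCapacity_mem A U T s τ hs hB k i t ht)
      (isCBR_of_mem_BkCR A U T s τ k i t ht)
  refine ⟨main, ?_⟩
  rintro i _ ⟨t, ht, rfl⟩
  exact Set.mem_iInter.2 fun k => main i k ⟨t, Set.mem_iInter.1 ht k, rfl⟩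

end
end

section
/- For any finite strategic game and every player i ∈ I, the set of Choquet rationalizable actions under concave capacities coincides with the set of rationalizable actions under additive capacities, and both are contained in the set of Choquet rationalizable actions under convex capacities: R_i^{conc,∞} = R_i^{add,∞} ⊆ R_i^{conv,∞}. -/
/-!
Additive capacities are both convex and concave, and an additive capacity believes `E` exactly when
`Eᶜ` is null, so additive beliefs stay admissible when the believed event grows; this gives
`R^{add} ⊆ R^{conv}` at every level.

For concave versus additive, let `a` be a Choquet best response to a concave capacity `ν` and let
`g` be its payoff function. Greedily assigning to each state its marginal `ν`-contribution, in order
of decreasing `g`, gives an additive `p ≤ ν` that agrees with `ν` on the upper level sets of `g`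
(`exists_additive_below`). Hence, for every alternative `a'` with payoff function `g'`,
`∫ g' dp ≤ ∫ g' dν ≤ ∫ g dν = ∫ g dp`, where the first inequality is monotonicity of the Choquet
integral in the capacity (`choquetInt_mono`). So `a` is a best response to `p`, and since `p ≤ ν`,
`p` believes every event that `ν` believes. The equality follows level by level.
-/

open Classical

noncomputable section

variable {I : Type} [Fintype I] [DecidableEq I]

variable (A : I → Type) [∀ i, Fintype (A i)] [∀ i, Nonempty (A i)]
  (U : ∀ i, (∀ j, A j) → ℝ)

/-- A capacity is convex if `ν(E) + ν(F) ≤ ν(E ∪ F) + ν(E ∩ F)` for all `E, F`. -/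
def IsConvexCap {σ : Type*} (ν : Capacity σ) : Prop :=
  ∀ E F : Set σ, ν.toFun E + ν.toFun F ≤ ν.toFun (E ∪ F) + ν.toFun (E ∩ F)

/-- A capacity is concave if `ν(E) + ν(F) ≥ ν(E ∪ F) + ν(E ∩ F)` for all `E, F`. -/
def IsConcaveCap {σ : Type*} (ν : Capacity σ) : Prop :=
  ∀ E F : Set σ, ν.toFun (E ∪ F) + ν.toFun (E ∩ F) ≤ ν.toFun E + ν.toFun F

/-- A capacity is additive if `ν(E ∪ F) = ν(E) + ν(F)` for all disjoint `E, F`. -/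
def IsAdditiveCap {σ : Type*} (ν : Capacity σ) : Prop :=
  ∀ E F : Set σ, Disjoint E F → ν.toFun (E ∪ F) = ν.toFun E + ν.toFun F

/-- `r`-Choquet rationalizability: the inductive definition of Choquet rationalizability
restricted to capacities satisfying the restriction `P` (e.g. convex, concave, additive).
`(CRres P k).1 i = C_i^{r,k+1}` and `(CRres P k).2 i = R_i^{r,k+1}`. -/
def CRres (P : ∀ i, Capacity (Opp A i) → Prop) :
    ℕ → (∀ i, Set (Capacity (Opp A i))) × (∀ i, Set (A i))
  | 0 =>
      let C : ∀ i, Set (Capacity (Opp A i)) := fun i => {ν | P i ν}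
      ⟨C, fun i => {a | ∃ ν ∈ C i, IsCBR A U i ν.toFun a}⟩
  | k + 1 =>
      let p := CRres P k
      let C : ∀ i, Set (Capacity (Opp A i)) :=
        fun i => {ν ∈ p.1 i | Believes ν.toFun (prodSet i p.2)}
      ⟨C, fun i => {a | ∃ ν ∈ C i, IsCBR A U i ν.toFun a}⟩

/-- `Rres P k i = R_i^{r,k+1}`. -/
def Rres (P : ∀ i, Capacity (Opp A i) → Prop) (k : ℕ) (i : I) : Set (A i) :=
  (CRres A U P k).2 i

/-- `RresInf P i = R_i^{r,∞}`. -/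
def RresInf (P : ∀ i, Capacity (Opp A i) → Prop) (i : I) : Set (A i) :=
  ⋂ k, Rres A U P k i

/-! ### Additive capacities and beliefs -/

lemma IsAdditiveCap.modular {σ : Type*} {ν : Capacity σ} (h : IsAdditiveCap ν) (E F : Set σ) :
    ν.toFun (E ∪ F) + ν.toFun (E ∩ F) = ν.toFun E + ν.toFun F := by
  have h1 := h E (F \ E) Set.disjoint_sdiff_right
  have h2 := h (F ∩ E) (F \ E) Set.disjoint_sdiff_inter.symm
  rw [Set.union_sdiff_self] at h1
  rw [Set.inter_union_sdiff] at h2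
  rw [Set.inter_comm E F]
  linarith

lemma Capacity.compl_null_of_believes {σ : Type*} {ν : Capacity σ} {E : Set σ}
    (h : Believes ν.toFun E) : ν.toFun Eᶜ = 0 := by
  have := h ∅ (Set.empty_subset _)
  rwa [Set.union_empty, ν.empty'] at this

lemma Capacity.nonneg {σ : Type*} (ν : Capacity σ) (E : Set σ) : 0 ≤ ν.toFun E := by
  rw [← ν.empty']
  exact ν.mono' (Set.empty_subset E)

lemma IsAdditiveCap.believes_of_null {σ : Type*} {ν : Capacity σ} (h : IsAdditiveCap ν)
    {E : Set σ} (h0 : ν.toFun Eᶜ ≤ 0) : Believes ν.toFun E := by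
  intro F hF
  rw [h Eᶜ F (Set.disjoint_compl_left_iff_subset.mpr hF)]
  linarith [ν.nonneg Eᶜ]

lemma IsAdditiveCap.believes_mono {σ : Type*} {ν : Capacity σ} (h : IsAdditiveCap ν)
    {E F : Set σ} (hE : Believes ν.toFun E) (hEF : E ⊆ F) : Believes ν.toFun F :=
  h.believes_of_null ((ν.mono' (Set.compl_subset_compl.mpr hEF)).trans
    (Capacity.compl_null_of_believes hE).le)

/-! ### Monotonicity of the Choquet integral -/

/-- Summation by parts for the Choquet sum of a nonnegative set function vanishing at `∅` and at the
whole space. `S` may be any finite set containing the values of `g`; this lets the induction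
truncate `g` from above. -/
lemma choquet_sum_nonneg {σ : Type*} (δ : Set σ → ℝ) (h0 : δ ∅ = 0) (h1 : δ Set.univ = 0)
    (hδ : ∀ E, 0 ≤ δ E) (S : Finset ℝ) :
    ∀ g : σ → ℝ, (∀ s, g s ∈ S) →
      0 ≤ ∑ x ∈ S, x * (δ {s | x ≤ g s} - δ {s | x < g s}) := by
  induction S using Finset.induction_on_max with
  | empty => intro g _; simp
  | insert a S ha ih =>
    intro g hg
    have haS : a ∉ S := fun h => lt_irrefl _ (ha a h)
    have hle : ∀ s, g s ≤ a := fun s => by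
      rcases Finset.mem_insert.mp (hg s) with h | h
      · exact h.le
      · exact (ha _ h).le
    have hempty : {s | a < g s} = ∅ := by
      ext s; simpa using hle s
    rw [Finset.sum_insert haS, hempty, h0, sub_zero]
    rcases S.eq_empty_or_nonempty with rfl | hS
    · have huniv : {s | a ≤ g s} = Set.univ := by
        ext s
        have : g s = a := by simpa using hg s
        simp [this]
      simp [huniv, h1]
    · set b := S.max' hS with hb
      have hbS : b ∈ S := S.max'_mem hS
      have hba : b < a := ha b hbS
      have hmax : ∀ x ∈ S, x ≤ b := fun x hx => S.le_max' x hx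
      have key := ih (fun s => min (g s) b) (fun s => by
        rcases Finset.mem_insert.mp (hg s) with h | h
        · simpa [h, min_eq_right hba.le] using hbS
        · simpa [min_eq_left (hmax _ h)] using h)
      -- Truncating `g` at `b` only changes the strict level set at `b`.
      have hterm : ∀ x ∈ S,
          x * (δ {s | x ≤ min (g s) b} - δ {s | x < min (g s) b})
            = x * (δ {s | x ≤ g s} - δ {s | x < g s})
              + if x = b then b * δ {s | a ≤ g s} else 0 := by
        intro x hx
        have e1 : {s | x ≤ min (g s) b} = {s | x ≤ g s} := by
          ext s; simp [hmax x hx]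
        rw [e1]
        by_cases hxb : x = b
        · have e2 : {s | x < min (g s) b} = ∅ := by
            ext s; simp [hxb]
          have e3 : {s | x < g s} = {s | a ≤ g s} := by
            ext s
            simp only [Set.mem_ofPred_eq]
            constructor
            · intro h
              rcases Finset.mem_insert.mp (hg s) with h' | h'
              · exact h'.ge
              · exact absurd (hmax _ h') (by rw [← hxb]; exact not_le.mpr h)
            · intro h
              rw [hxb]; exact hba.trans_le h
          rw [e2, e3, h0, if_pos hxb, hxb]; ring
        · have hlt : x < b := lt_of_le_of_ne (hmax x hx) hxb
          have e2 : {s | x < min (g s) b} = {s | x < g s} := by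
            ext s; simp [hlt]
          rw [e2, if_neg hxb, add_zero]
      rw [Finset.sum_congr rfl hterm, Finset.sum_add_distrib, Finset.sum_ite_eq' S b,
        if_pos hbS] at key
      have := mul_nonneg (sub_nonneg.mpr hba.le) (hδ {s | a ≤ g s})
      linarith

lemma choquetInt_mono {σ : Type*} (p ν : Capacity σ) (h : ∀ E, p.toFun E ≤ ν.toFun E)
    (g : σ → ℝ) : choquetInt p.toFun g ≤ choquetInt ν.toFun g := by
  unfold choquetInt
  split_ifs with hf
  · have := choquet_sum_nonneg (fun E => ν.toFun E - p.toFun E) (by simp [ν.empty', p.empty'])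
      (by simp [ν.univ', p.univ']) (fun E => sub_nonneg.mpr (h E)) hf.toFinset g (by simp)
    rw [← sub_nonneg, ← Finset.sum_sub_distrib]
    refine this.trans_eq (Finset.sum_congr rfl fun x _ => ?_)
    ring
  · exact le_rfl

/-! ### The greedy additive capacity -/

/-- The greedy vertex: below a concave capacity `ν` there is an additive one with the same Choquet
integral of a prescribed function `g`. -/
lemma exists_additive_below {σ : Type*} [Finite σ] (ν : Capacity σ) (hν : IsConcaveCap ν)
    (g : σ → ℝ) : ∃ p : Capacity σ, IsAdditiveCap p ∧ (∀ E, p.toFun E ≤ ν.toFun E) ∧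
      choquetInt p.toFun g = choquetInt ν.toFun g := by
  have := Fintype.ofFinite σ
  -- An injective ranking of the states along which `g` decreases; ties are broken arbitrarily.
  let r : σ → Lex (ℝ × Fin (Fintype.card σ)) := fun s => toLex (-g s, Fintype.equivFin σ s)
  have hr : Function.Injective r := fun s t h => by
    have h' : (-g s, Fintype.equivFin σ s) = (-g t, Fintype.equivFin σ t) := toLex.injective h
    exact (Fintype.equivFin σ).injective (Prod.ext_iff.mp h').2
  have hrg : ∀ s t, r s ≤ r t → g t ≤ g s := fun s t h => by
    rcases Prod.Lex.le_iff.mp h with h | h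
    · exact (neg_lt_neg_iff.mp h).le
    · exact (neg_inj.mp h.1).ge
  let w : σ → ℝ := fun s => ν.toFun {t | r t ≤ r s} - ν.toFun {t | r t < r s}
  have hw : ∀ s, 0 ≤ w s := fun s => sub_nonneg.mpr (ν.mono' fun t (ht : r t < r s) => ht.le)
  have hlt : ∀ (a : σ) (S : Finset σ), a ∉ S → (∀ x ∈ S, r x ≤ r a) → ∀ x ∈ S, r x < r a :=
    fun a S haS hmax x hx => lt_of_le_of_ne (hmax x hx) fun h => haS (hr h ▸ hx)
  have hle : ∀ S : Finset σ, ∑ s ∈ S, w s ≤ ν.toFun S := by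
    intro S
    induction S using Finset.induction_on_max_value r with
    | empty => simp [ν.empty']
    | insert a S haS hmax ih =>
      rw [Finset.sum_insert haS]
      have hl := hlt a S haS hmax
      have h := hν (↑(insert a S)) {t | r t < r a}
      have e1 : (↑(insert a S) : Set σ) ∪ {t | r t < r a} = {t | r t ≤ r a} := by
        ext t
        simp only [Finset.coe_insert, Set.mem_union, Set.mem_insert_iff, Finset.mem_coe,
          Set.mem_ofPred_eq]
        constructor
        · rintro ((rfl | h) | h)
          · exact le_rfl
          · exact hmax t h
          · exact h.le
        · intro h
          rcases h.lt_or_eq with h | h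
          · exact Or.inr h
          · exact Or.inl (Or.inl (hr h))
      have e2 : (↑(insert a S) : Set σ) ∩ {t | r t < r a} = ↑S := by
        ext t
        simp only [Finset.coe_insert, Set.mem_inter_iff, Set.mem_insert_iff, Finset.mem_coe,
          Set.mem_ofPred_eq]
        constructor
        · rintro ⟨rfl | h, h'⟩
          · exact absurd h' (lt_irrefl _)
          · exact h
        · exact fun h => ⟨Or.inr h, hl t h⟩
      rw [e1, e2] at h
      simp only [w]
      linarith
  -- On initial segments of the ranking the sum of marginal contributions telescopes.
  have heq : ∀ S : Finset σ, (∀ s ∈ S, ∀ t, r t ≤ r s → t ∈ S) → ∑ s ∈ S, w s = ν.toFun S := by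
    intro S
    induction S using Finset.induction_on_max_value r with
    | empty => simp [ν.empty']
    | insert a S haS hmax ih =>
      intro hdown
      have hl := hlt a S haS hmax
      rw [Finset.sum_insert haS, ih fun s hs t hts =>
        (Finset.mem_insert.mp (hdown s (Finset.mem_insert_of_mem hs) t hts)).resolve_left
          fun h => absurd (hl s hs) (not_lt.mpr (h ▸ hts))]
      have e1 : (↑(insert a S) : Set σ) = {t | r t ≤ r a} := by
        ext t
        simp only [Finset.mem_coe, Set.mem_ofPred_eq]
        refine ⟨fun h => ?_, hdown a (Finset.mem_insert_self a S) t⟩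
        rcases Finset.mem_insert.mp h with rfl | h
        · exact le_rfl
        · exact hmax t h
      have e2 : (↑S : Set σ) = {t | r t < r a} := by
        ext t
        simp only [Finset.mem_coe, Set.mem_ofPred_eq]
        refine ⟨hl t, fun h => ?_⟩
        exact (Finset.mem_insert.mp (hdown a (Finset.mem_insert_self a S) t h.le)).resolve_left
          fun h' => lt_irrefl _ (h' ▸ h)
      rw [e1, e2]
      simp only [w]
      ring
  have heq' : ∀ E : Set σ, (∀ s ∈ E, ∀ t, r t ≤ r s → t ∈ E) →
      ∑ s ∈ E.toFinset, w s = ν.toFun E := by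
    intro E hE
    rw [heq E.toFinset (by simpa using hE), Set.coe_toFinset]
  let p : Capacity σ :=
    { toFun := fun E => ∑ s ∈ E.toFinset, w s
      empty' := by simp
      univ' := (heq' Set.univ (by simp)).trans ν.univ'
      mono' := fun E F h =>
        Finset.sum_le_sum_of_subset_of_nonneg (Set.toFinset_mono h) fun s _ _ => hw s }
  refine ⟨p, ?_, ?_, ?_⟩
  · intro E F h
    simp only [p]
    rw [Set.toFinset_union, Finset.sum_union (Set.disjoint_toFinset.mpr h)]
  · intro E
    simpa using hle E.toFinset
  · have hup : ∀ x, p.toFun {s | x ≤ g s} = ν.toFun {s | x ≤ g s} := fun x =>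
      heq' _ fun s (hs : x ≤ g s) t hts => hs.trans (hrg t s hts)
    have hup' : ∀ x, p.toFun {s | x < g s} = ν.toFun {s | x < g s} := fun x =>
      heq' _ fun s (hs : x < g s) t hts => hs.trans_le (hrg t s hts)
    unfold choquetInt
    simp only [hup, hup']

/-! ### Comparison of the elimination procedures -/

lemma prodSet_mono {τ : I → Type} (i : I) {Q Q' : ∀ j, Set (τ j)} (h : ∀ j, Q j ⊆ Q' j) :
    prodSet i Q ⊆ prodSet i Q' := fun _ hb j => h j.val (hb j)

/-- If every additive capacity satisfies the restriction `P`, then additive rationalizability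
refines `P`-rationalizability at every level, for admissible beliefs as well as for actions. -/
lemma CRres_additive_subset (P : ∀ i, Capacity (Opp A i) → Prop)
    (hP : ∀ i ν, IsAdditiveCap ν → P i ν) (k : ℕ) :
    (∀ i, (CRres A U (fun _ ν => IsAdditiveCap ν) k).1 i ⊆
        {ν ∈ (CRres A U P k).1 i | IsAdditiveCap ν}) ∧
      ∀ i, (CRres A U (fun _ ν => IsAdditiveCap ν) k).2 i ⊆ (CRres A U P k).2 i := by
  induction k with
  | zero =>
    exact ⟨fun i ν h => ⟨hP i ν h, h⟩, fun i a ⟨ν, h, ha⟩ => ⟨ν, hP i ν h, ha⟩⟩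
  | succ k ih =>
    have hC : ∀ i, (CRres A U (fun _ ν => IsAdditiveCap ν) (k + 1)).1 i ⊆
        {ν ∈ (CRres A U P (k + 1)).1 i | IsAdditiveCap ν} := fun i ν ⟨h, hb⟩ =>
      ⟨⟨(ih.1 i h).1, (ih.1 i h).2.believes_mono hb (prodSet_mono i ih.2)⟩, (ih.1 i h).2⟩
    exact ⟨hC, fun i a ⟨ν, h, ha⟩ => ⟨ν, (hC i h).1, ha⟩⟩

/-- A best response to a concave capacity is a best response to an additive capacity below it. -/
lemma exists_additive_cbr (i : I) (ν : Capacity (Opp A i)) (hν : IsConcaveCap ν) (a : A i)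
    (ha : IsCBR A U i ν.toFun a) : ∃ p : Capacity (Opp A i), IsAdditiveCap p ∧
      (∀ E, p.toFun E ≤ ν.toFun E) ∧ IsCBR A U i p.toFun a := by
  obtain ⟨p, hp, hle, heq⟩ := exists_additive_below ν hν (payoff A U i a)
  exact ⟨p, hp, hle, fun a' => (choquetInt_mono p ν hle _).trans ((ha a').trans_eq heq.symm)⟩

/-- Concave rationalizability refines additive rationalizability at every level. The induction
carries the fact that every additive capacity below a level-`k` concave belief is a level-`k`
additive belief. -/
lemma CRres_concave_subset (k : ℕ) :
    (∀ i, ∀ ν ∈ (CRres A U (fun _ ν => IsConcaveCap ν) k).1 i, IsConcaveCap ν ∧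
        ∀ p : Capacity (Opp A i), IsAdditiveCap p → (∀ E, p.toFun E ≤ ν.toFun E) →
          p ∈ (CRres A U (fun _ ν => IsAdditiveCap ν) k).1 i) ∧
      ∀ i, (CRres A U (fun _ ν => IsConcaveCap ν) k).2 i ⊆
        (CRres A U (fun _ ν => IsAdditiveCap ν) k).2 i := by
  induction k with
  | zero =>
    refine ⟨fun i ν h => ⟨h, fun p hp _ => hp⟩, fun i a ⟨ν, h, ha⟩ => ?_⟩
    obtain ⟨p, hp, -, hbr⟩ := exists_additive_cbr A U i ν h a ha
    exact ⟨p, hp, hbr⟩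
  | succ k ih =>
    have hC : ∀ i, ∀ ν ∈ (CRres A U (fun _ ν => IsConcaveCap ν) (k + 1)).1 i, IsConcaveCap ν ∧
        ∀ p : Capacity (Opp A i), IsAdditiveCap p → (∀ E, p.toFun E ≤ ν.toFun E) →
          p ∈ (CRres A U (fun _ ν => IsAdditiveCap ν) (k + 1)).1 i := by
      rintro i ν ⟨h, hb⟩
      refine ⟨(ih.1 i ν h).1, fun p hp hle => ⟨(ih.1 i ν h).2 p hp hle, ?_⟩⟩
      have hpb := hp.believes_of_null ((hle _).trans (Capacity.compl_null_of_believes hb).le)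
      exact hp.believes_mono hpb (prodSet_mono i ih.2)
    refine ⟨hC, fun i a ⟨ν, h, ha⟩ => ?_⟩
    obtain ⟨p, hp, hle, hbr⟩ := exists_additive_cbr A U i ν (hC i ν h).1 a ha
    exact ⟨p, (hC i ν h).2 p hp hle, hbr⟩

/-- for every player, Choquet rationalizability under concave capacities
coincides with rationalizability under additive capacities, and both are contained in
Choquet rationalizability under convex capacities:
`R_i^{conc,∞} = R_i^{add,∞} ⊆ R_i^{conv,∞}`. -/
theorem concave_eq_additive_subset_convex [Nonempty I] (i : I) :
    RresInf A U (fun _ ν => IsConcaveCap ν) i = RresInf A U (fun _ ν => IsAdditiveCap ν) i ∧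
    RresInf A U (fun _ ν => IsAdditiveCap ν) i ⊆ RresInf A U (fun _ ν => IsConvexCap ν) i := by
  refine ⟨Set.Subset.antisymm ?_ ?_, ?_⟩
  · exact Set.iInter_mono fun k => (CRres_concave_subset A U k).2 i
  · exact Set.iInter_mono fun k => (CRres_additive_subset A U _
      (fun _ ν h E F => (h.modular E F).le) k).2 i
  · exact Set.iInter_mono fun k => (CRres_additive_subset A U _
      (fun _ ν h E F => (h.modular E F).ge) k).2 i

end
end

section
/- Let ν be a capacity on a measurable space (Ω, Σ) and let ω ∈ Ω with {ω} ∈ Σ. Then ν believes the singleton {ω} if and only if ν is the degenerate additive probability measure at ω, i.e., ν(F) = 1 for every F ∈ Σ with ω ∈ F and ν(F) = 0 for every F ∈ Σ with ω ∉ F. (In particular, a Choquet expected utility player can believe a singleton set of opponents' action profiles only if her capacity is an additive, degenerate probability measure, so that her Choquet preference is a subjective expected utility preference.) -/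
/-- a capacity `ν` believes a measurable singleton `{ω}` iff `ν` is the
degenerate additive probability measure at `ω`: `ν(F) = 1` for every measurable `F`
containing `ω` and `ν(F) = 0` for every measurable `F` not containing `ω`. -/
theorem believes_singleton_iff_degenerate {Ω : Type*} [MeasurableSpace Ω]
    (ν : MCapacity Ω) (ω : Ω) (hω : MeasurableSet ({ω} : Set Ω)) :
    MBelieves ν {ω} ↔
      ((∀ F : Set Ω, MeasurableSet F → ω ∈ F → ν.toFun F = 1) ∧
       (∀ F : Set Ω, MeasurableSet F → ω ∉ F → ν.toFun F = 0)) := by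
  constructor
  · intro h
    have h1 : ν.toFun {ω} = 1 := by
      have := h {ω} hω subset_rfl
      rw [Set.compl_union_self, ν.univ'] at this
      exact this.symm
    have h0 : ν.toFun ({ω}ᶜ) = 0 := by
      have := h ∅ MeasurableSet.empty (Set.empty_subset _)
      rwa [Set.union_empty, ν.empty'] at this
    refine ⟨fun F hF hωF => le_antisymm ?_ ?_, fun F hF hωF => le_antisymm ?_ ?_⟩
    · exact (ν.mono' hF MeasurableSet.univ (Set.subset_univ F)).trans_eq ν.univ'
    · exact h1.symm.trans_le (ν.mono' hω hF (Set.singleton_subset_iff.2 hωF))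
    · exact (ν.mono' hF hω.compl (Set.subset_compl_singleton_iff.2 hωF)).trans_eq h0
    · exact ν.empty'.symm.trans_le (ν.mono' MeasurableSet.empty hF (Set.empty_subset F))
  · rintro ⟨h1, h0⟩ F hF -
    by_cases hωF : ω ∈ F
    · rw [h1 F hF hωF, h1 _ (hω.compl.union hF) (Or.inr hωF)]
    · rw [h0 F hF hωF, h0 _ (hω.compl.union hF) (by simpa using hωF)]
end

section
/- Let ν be a capacity on a measurable space (Ω, Σ) that is convex or concave, and let E ∈ Σ. Then E is additively-separable for ν if and only if ν(E) + ν(Ω ∖ E) = 1. -/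
/-- A capacity is convex: `ν(E) + ν(F) ≤ ν(E ∪ F) + ν(E ∩ F)` on measurable sets. -/
def MConvex {Ω : Type*} [MeasurableSpace Ω] (ν : MCapacity Ω) : Prop :=
  ∀ E F : Set Ω, MeasurableSet E → MeasurableSet F →
    ν.toFun E + ν.toFun F ≤ ν.toFun (E ∪ F) + ν.toFun (E ∩ F)

/-- A capacity is concave: `ν(E) + ν(F) ≥ ν(E ∪ F) + ν(E ∩ F)` on measurable sets. -/
def MConcave {Ω : Type*} [MeasurableSpace Ω] (ν : MCapacity Ω) : Prop :=
  ∀ E F : Set Ω, MeasurableSet E → MeasurableSet F →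
    ν.toFun (E ∪ F) + ν.toFun (E ∩ F) ≤ ν.toFun E + ν.toFun F

/-- if the capacity `ν` is convex or concave, then a measurable event `E`
is additively-separable for `ν` iff `ν(E) + ν(Ω ∖ E) = 1`. -/
theorem addSep_iff_additive_at_E_of_convex_or_concave {Ω : Type*} [MeasurableSpace Ω]
    (ν : MCapacity Ω) (hν : MConvex ν ∨ MConcave ν) (E : Set Ω)
    (hE : MeasurableSet E) :
    AddSep ν E ↔ ν.toFun E + ν.toFun Eᶜ = 1 := by
  -- `F ∪ E` and `Eᶜ` cover `Ω` and meet in `F ∩ Eᶜ`.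
  have key : ∀ F : Set Ω, F ∪ E ∪ Eᶜ = Set.univ ∧ (F ∪ E) ∩ Eᶜ = F ∩ Eᶜ ∧
      (F ∩ E) ∪ (F ∩ Eᶜ) = F ∧ (F ∩ E) ∩ (F ∩ Eᶜ) = ∅ := by
    intro F
    refine ⟨?_, ?_, ?_, ?_⟩ <;> ext x <;> simp <;> tauto
  constructor
  · intro h
    have := h Set.univ MeasurableSet.univ
    rw [Set.univ_inter, Set.univ_inter, ν.univ'] at this
    exact this.symm
  · intro h F hF
    obtain ⟨hcover, hmeet, hsplit, hdisj⟩ := key F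
    have hFE := hF.inter hE
    have hFEc := hF.inter hE.compl
    rcases hν with hν | hν
    all_goals
      have h₁ := hν F E hF hE
      have h₂ := hν (F ∪ E) Eᶜ (hF.union hE) hE.compl
      have h₃ := hν (F ∩ E) (F ∩ Eᶜ) hFE hFEc
      rw [hcover, hmeet, ν.univ'] at h₂
      rw [hsplit, hdisj, ν.empty'] at h₃
      linarith
end

section
/- There exist a finite set Ω (with the σ-algebra of all subsets), a capacity ν on Ω, and an event E ⊆ Ω such that ν(E) + ν(Ω ∖ E) = 1 but E is not additively-separable for ν, i.e., there is some F ⊆ Ω with ν(F) ≠ ν(F ∩ E) + ν(F ∩ (Ω ∖ E)). Hence additivity of a capacity with respect to an event does not imply that the event is unambiguous. -/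
/-- The majority capacity on three points: an event has capacity `1` if it has at least two
elements and `0` otherwise. -/
noncomputable def majorityCapacity : Capacity (Fin 3) where
  toFun S := open Classical in if S.Nontrivial then 1 else 0
  empty' := by simp
  univ' := if_pos Set.nontrivial_univ
  mono' E F h := by
    by_cases hE : E.Nontrivial
    · simp [hE, hE.mono h]
    · simp only [hE, if_false]
      split_ifs <;> norm_num

/-- there exist a finite set `Ω`, a capacity `ν` on `Ω` and an event `E`
with `ν(E) + ν(Ω ∖ E) = 1` but such that `E` is not additively-separable for `ν`:
some `F ⊆ Ω` has `ν(F) ≠ ν(F ∩ E) + ν(F ∩ (Ω ∖ E))`.  Hence additivity of a capacity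
with respect to an event does not imply that the event is unambiguous. -/
theorem additivity_at_event_not_additively_separable :
    ∃ (Ω : Type) (_ : Fintype Ω) (ν : Capacity Ω) (E : Set Ω),
      ν.toFun E + ν.toFun Eᶜ = 1 ∧
      ∃ F : Set Ω, ν.toFun F ≠ ν.toFun (F ∩ E) + ν.toFun (F ∩ Eᶜ) := by
  -- `E = {0}` has capacity `0` and its complement `{1, 2}` has capacity `1`, while
  -- `F = {0, 1}` has capacity `1` but is split by `E` into two null singletons.
  refine ⟨Fin 3, inferInstance, majorityCapacity, {0}, ?_, {0, 1}, ?_⟩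
  · have h : ({0}ᶜ : Set (Fin 3)).Nontrivial := ⟨1, by simp, 2, by simp, by decide⟩
    simp [majorityCapacity, h]
  · have h : ({0, 1} : Set (Fin 3)).Nontrivial := Set.nontrivial_pair (by decide)
    have h₀ : ({0, 1} ∩ {0} : Set (Fin 3)) = {0} := by ext x; fin_cases x <;> simp
    have h₁ : ({0, 1} ∩ {0}ᶜ : Set (Fin 3)) = {1} := by ext x; fin_cases x <;> simp
    rw [h₀, h₁]
    simp [majorityCapacity, h]
end
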